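/- For every integer k ≥ 3, ∑_{j=2}^{k−1} T(k−j, j) + T(1, k−1) = (k−1) T(k) − (1/2) ∑_{j=2}^{k−2} T(j) T(k−j). -/

import Mathlib

/-- The multiple T-value `T(k₁, …, k_r)`:
`2^r` times the sum over `0 < m₁ < ⋯ < m_r` with `m_i ≡ i (mod 2)`
of `1 / (m₁^{k₁} ⋯ m_r^{k_r})`. -/
noncomputable def MTV (k : List ℕ) : ℝ :=
  2 ^ k.length *
    ∑' f : {f : Fin k.length → ℕ // StrictMono f ∧ ∀ i, f i % 2 = ((i : ℕ) + 1) % 2},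
      ∏ i : Fin k.length, (1 : ℝ) / (f.1 i : ℝ) ^ k.get i


/-- the odd number `2 s + 1` as a real -/
noncomputable def od (s : ℕ) : ℝ := 2 * (s : ℝ) + 1

lemma od_pos (s : ℕ) : 0 < od s := by unfold od; positivity
lemma one_le_od (s : ℕ) : 1 ≤ od s := by
  unfold od; have : (0:ℝ) ≤ s := Nat.cast_nonneg s
  linarith

def eqv1 (n : ℕ) (hn : n = 1) :
    {f : Fin n → ℕ // StrictMono f ∧ ∀ i, f i % 2 = ((i : ℕ) + 1) % 2} ≃ ℕ where
  toFun f := f.1 ⟨0, by omega⟩ / 2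
  invFun s := ⟨fun _ => 2 * s + 1, by
    subst hn
    refine ⟨fun a b h => ?_, fun i => ?_⟩
    · exact absurd h (by omega)
    · have : (i : ℕ) = 0 := by omega
      simp only [this]
      omega⟩
  left_inv f := by
    subst hn
    ext i
    have h := f.2.2 0
    have : i = 0 := Subsingleton.elim _ _
    subst this
    simp at h ⊢
    omega
  right_inv s := by simp; omega

def eqv2 (n : ℕ) (hn : n = 2) :
    {f : Fin n → ℕ // StrictMono f ∧ ∀ i, f i % 2 = ((i : ℕ) + 1) % 2} ≃ ℕ × ℕ where
  toFun f := (f.1 ⟨0, by omega⟩ / 2, (f.1 ⟨1, by omega⟩ - f.1 ⟨0, by omega⟩) / 2)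
  invFun s := ⟨fun i => if (i : ℕ) = 0 then 2 * s.1 + 1 else (2 * s.1 + 1) + (2 * s.2 + 1), by
    subst hn
    refine ⟨fun a b h => ?_, fun i => ?_⟩
    · fin_cases a <;> fin_cases b <;> simp at h ⊢
    · fin_cases i <;> simp <;> omega⟩
  left_inv f := by
    subst hn
    have h0 := f.2.2 0
    have h1 := f.2.2 1
    have h2 : f.1 0 < f.1 1 := f.2.1 (by decide)
    ext i
    fin_cases i <;> simp at h0 h1 ⊢ <;> omega
  right_inv s := by
    ext <;> simp <;> omega

lemma MTV_one (j : ℕ) : MTV [j] = 2 * ∑' s : ℕ, (od s)⁻¹ ^ j := by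
  unfold MTV
  rw [← (eqv1 [j].length rfl).symm.tsum_eq]
  simp [eqv1, od]

lemma MTV_two (i j : ℕ) :
    MTV [i, j] = 4 * ∑' p : ℕ × ℕ, (od p.1)⁻¹ ^ i * (od p.1 + od p.2)⁻¹ ^ j := by
  unfold MTV
  rw [← (eqv2 [i, j].length rfl).symm.tsum_eq]
  congr 1
  · norm_num
  · refine tsum_congr fun p => ?_
    have := Fin.prod_univ_two (fun x : Fin 2 => (1:ℝ) / (((eqv2 2 rfl).symm p).1 x : ℝ) ^ [i, j].get x)
    refine this.trans ?_
    simp [eqv2, od]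

lemma geoA (x y : ℝ) (n : ℕ) :
    (∑ i ∈ Finset.range n, x ^ (n - i) * y ^ (i + 2)) * (x - y) = x * y ^ 2 * (x ^ n - y ^ n) := by
  induction n with
  | zero => simp
  | succ n ih =>
    rw [Finset.sum_range_succ]
    have : ∑ i ∈ Finset.range n, x ^ (n + 1 - i) * y ^ (i + 2)
        = x * ∑ i ∈ Finset.range n, x ^ (n - i) * y ^ (i + 2) := by
      rw [Finset.mul_sum]
      refine Finset.sum_congr rfl fun i hi => ?_
      have := Finset.mem_range.1 hi
      rw [show n + 1 - i = (n - i) + 1 by omega]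
      ring
    rw [this, show n + 1 - n = 1 by omega, add_mul, mul_assoc, ih]
    ring

lemma geoB (x y : ℝ) (q : ℕ) :
    (∑ i ∈ Finset.range q, x ^ (i + 2) * y ^ (q + 1 - i)) * (x - y)
      = x ^ 2 * y ^ 2 * (x ^ q - y ^ q) := by
  have h := geoA y x q
  have : ∑ i ∈ Finset.range q, x ^ (i + 2) * y ^ (q + 1 - i)
        = y * ∑ i ∈ Finset.range q, y ^ (q - i) * x ^ (i + 2) := by
      rw [Finset.mul_sum]
      refine Finset.sum_congr rfl fun i hi => ?_
      have := Finset.mem_range.1 hi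
      rw [show q + 1 - i = (q - i) + 1 by omega]
      ring
  rw [this]
  linear_combination (-y) * h

noncomputable def FF (p : ℕ) (z : ℕ × ℕ) : ℝ :=
  (od z.1)⁻¹ ^ p * (od z.2)⁻¹ * (od z.1 + od z.2)⁻¹

noncomputable def GG (p : ℕ) (z : ℕ × ℕ) : ℝ :=
  (od z.1)⁻¹ ^ p * (od z.2)⁻¹ * (od z.2 - od z.1)⁻¹

lemma pointA (q : ℕ) (z : ℕ × ℕ) :
    (∑ i ∈ Finset.range (q + 1), (od z.1)⁻¹ ^ (q + 1 - i) * (od z.1 + od z.2)⁻¹ ^ (i + 2))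
      + (od z.2)⁻¹ ^ 1 * (od z.2 + od z.1)⁻¹ ^ (q + 2) = FF (q + 1) z := by
  have h := geoA (od z.1)⁻¹ (od z.1 + od z.2)⁻¹ (q + 1)
  have ha := od_pos z.1
  have hb := od_pos z.2
  unfold FF
  generalize od z.1 = a at *
  generalize od z.2 = b at *
  have hx : a⁻¹ - (a + b)⁻¹ = b * a⁻¹ * (a + b)⁻¹ := by
    field_simp; ring
  have hne : b * a⁻¹ * (a + b)⁻¹ ≠ 0 := by positivity
  rw [hx] at h
  rw [eq_div_of_mul_eq hne h, add_comm b a]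
  have h1 : a * a⁻¹ = 1 := by field_simp
  have h2 : (a+b) * (a+b)⁻¹ = 1 := by field_simp
  have h3 : b * b⁻¹ = 1 := by field_simp
  generalize (a+b)⁻¹ = y at *
  generalize a⁻¹ = x at *
  have hx0 : x ≠ 0 := by rintro rfl; simp at h1
  have hy0 : y ≠ 0 := by rintro rfl; simp at h2
  field_simp
  ring

lemma pointB (q : ℕ) (z : ℕ × ℕ) :
    (∑ i ∈ Finset.range q, (od z.1)⁻¹ ^ (i + 2) * (od z.2)⁻¹ ^ (q + 1 - i))
      = GG (q + 1) z + GG (q + 1) z.swap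
        + (if z.1 = z.2 then (q : ℝ) * (od z.1)⁻¹ ^ (q + 3) else 0) := by
  obtain ⟨s, t⟩ := z
  have ha := od_pos s
  have hb := od_pos t
  simp only [GG, Prod.swap]
  split_ifs with hst
  · subst hst
    simp only [sub_self, inv_zero, mul_zero, zero_add]
    rw [Finset.sum_congr rfl (g := fun _ => (od s)⁻¹ ^ (q + 3))]
    · simp
    · intro i hi
      have := Finset.mem_range.1 hi
      rw [← pow_add]; congr 1; omega
  · have h := geoB (od s)⁻¹ (od t)⁻¹ q
    have hne : od t - od s ≠ 0 := by
      unfold od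
      intro h
      apply hst
      have : (s:ℝ) = t := by linarith
      exact_mod_cast this
    generalize od s = a at *
    generalize od t = b at *
    have hx : a⁻¹ - b⁻¹ = (b - a) * a⁻¹ * b⁻¹ := by field_simp
    have hne' : (b - a) * a⁻¹ * b⁻¹ ≠ 0 := by
      have := ha.ne'; have := hb.ne'
      simp_all
    rw [hx] at h
    rw [eq_div_of_mul_eq hne' h, ← neg_sub b a, inv_neg]
    have hx0 : a⁻¹ ≠ 0 := by positivity
    have hy0 : b⁻¹ ≠ 0 := by positivity
    generalize a⁻¹ = x at *
    generalize b⁻¹ = y at *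
    generalize b - a = d at *
    field_simp
    ring

lemma summ_pow (j : ℕ) (hj : 2 ≤ j) : Summable fun s : ℕ => (od s)⁻¹ ^ j := by
  have h := (summable_nat_add_iff 1).2 (Real.summable_nat_pow_inv.2 (show 1 < j by omega))
  refine Summable.of_nonneg_of_le (fun s => by have := od_pos s; positivity) (fun s => ?_) h
  rw [inv_pow]
  have : ((s + 1 : ℕ) : ℝ) ≤ od s := by
    unfold od; push_cast; have : (0:ℝ) ≤ s := Nat.cast_nonneg s
    linarith
  gcongr

/-- `x^{-3/2}` -/
noncomputable def vv (x : ℝ) : ℝ := x⁻¹ * (√x)⁻¹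

lemma vv_nonneg {x : ℝ} (hx : 0 ≤ x) : 0 ≤ vv x := by unfold vv; positivity

lemma vv_eq {x : ℝ} (hx : 0 ≤ x) : vv x = x ^ (-(3/2) : ℝ) := by
  unfold vv
  rcases hx.eq_or_lt with rfl | hx
  · rw [Real.zero_rpow (by norm_num)]; simp
  · rw [Real.sqrt_eq_rpow, ← Real.rpow_neg hx.le, ← Real.rpow_neg_one x, ← Real.rpow_add hx]
    norm_num

lemma vv_anti {x y : ℝ} (hx : 0 < x) (hxy : x ≤ y) : vv y ≤ vv x := by
  unfold vv
  gcongr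

lemma summ_vo : Summable fun s : ℕ => vv (od s) := by
  have h := (summable_nat_add_iff 1).2
    (Real.summable_nat_rpow.2 (show (-(3/2) : ℝ) < -1 by norm_num))
  refine Summable.of_nonneg_of_le (fun s => vv_nonneg (od_pos s).le) (fun s => ?_) h
  rw [← vv_eq (by positivity)]
  apply vv_anti (by positivity)
  unfold od; push_cast; have : (0:ℝ) ≤ s := Nat.cast_nonneg s
  linarith

lemma summ_vi : Summable fun s : ℤ => vv |(s:ℝ)| := by
  have h := Real.summable_abs_int_rpow (b := 3/2) (by norm_num)
  refine h.congr fun s => ?_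
  rw [vv_eq (abs_nonneg _)]

lemma bd {m d : ℝ} (hm : 0 < m) (hd : 0 < d) : m⁻¹ * d⁻¹ * (m + d)⁻¹ ≤ vv m * vv d := by
  unfold vv
  have : √m * √d ≤ m + d := by
    nlinarith [Real.sq_sqrt hm.le, Real.sq_sqrt hd.le, sq_nonneg (√m - √d), Real.sqrt_nonneg m,
      Real.sqrt_nonneg d]
  calc m⁻¹ * d⁻¹ * (m + d)⁻¹ ≤ m⁻¹ * d⁻¹ * (√m * √d)⁻¹ := by gcongr
    _ = _ := by rw [mul_inv]; ring

lemma inv_pow_le (s p : ℕ) (hp : 1 ≤ p) : (od s)⁻¹ ^ p ≤ (od s)⁻¹ :=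
  pow_le_of_le_one (inv_nonneg.2 (od_pos s).le) (inv_le_one_of_one_le₀ (one_le_od s)) (by omega)

lemma summ_F (p : ℕ) (hp : 1 ≤ p) : Summable (FF p) := by
  have h := summ_vo.mul_of_nonneg summ_vo (fun s => vv_nonneg (od_pos s).le)
    (fun s => vv_nonneg (od_pos s).le)
  refine Summable.of_nonneg_of_le (fun z => ?_) (fun z => ?_) h
  · have := od_pos z.1; have := od_pos z.2
    unfold FF; positivity
  · have h1 := od_pos z.1; have h2 := od_pos z.2
    refine le_trans ?_ (bd h1 h2)
    unfold FF
    have := inv_pow_le z.1 p hp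
    gcongr

lemma summ_G (p : ℕ) (hp : 1 ≤ p) : Summable (GG p) := by
  have h := summ_vo.mul_of_nonneg summ_vi (fun s => vv_nonneg (od_pos s).le)
    (fun s => vv_nonneg (abs_nonneg _))
  have i1 : Function.Injective fun z : ℕ × ℕ => (z.1, ((z.2 : ℤ) - z.1)) := by
    rintro ⟨a, b⟩ ⟨c, d⟩ h
    simp only [Prod.mk.injEq] at h ⊢
    omega
  have i2 : Function.Injective fun z : ℕ × ℕ => (z.2, ((z.2 : ℤ) - z.1)) := by
    rintro ⟨a, b⟩ ⟨c, d⟩ h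
    simp only [Prod.mk.injEq] at h ⊢
    omega
  have h1 := h.comp_injective i1
  have h2 := h.comp_injective i2
  refine Summable.of_norm_bounded (h1.add h2) fun z => ?_
  obtain ⟨s, t⟩ := z
  have ha := od_pos s
  have hb := od_pos t
  simp only [Function.comp, GG, Int.cast_sub, Int.cast_natCast]
  have n1 : 0 ≤ vv (od s) * vv |(t:ℝ) - s| :=
    mul_nonneg (vv_nonneg ha.le) (vv_nonneg (abs_nonneg _))
  have n2 : 0 ≤ vv (od t) * vv |(t:ℝ) - s| :=
    mul_nonneg (vv_nonneg hb.le) (vv_nonneg (abs_nonneg _))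
  have e : |od t - od s| = 2 * |(t:ℝ) - s| := by
    unfold od
    rw [show 2 * (t:ℝ) + 1 - (2 * s + 1) = 2 * (t - s) by ring, abs_mul]; norm_num
  have step : ‖(od s)⁻¹ ^ p * (od t)⁻¹ * (od t - od s)⁻¹‖
      ≤ (od s)⁻¹ * (od t)⁻¹ * |od t - od s|⁻¹ := by
    rw [norm_mul, norm_mul, Real.norm_of_nonneg (by positivity : 0 ≤ (od s)⁻¹ ^ p),
      Real.norm_of_nonneg (by positivity : 0 ≤ (od t)⁻¹), Real.norm_eq_abs, abs_inv]
    have := inv_pow_le s p hp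
    gcongr
  refine step.trans ?_
  rcases lt_trichotomy s t with hst | hst | hst
  · have hd : 0 < (t:ℝ) - s := sub_pos.2 (by exact_mod_cast hst)
    have := bd ha (show 0 < |od t - od s| by rw [e]; positivity)
    have e2 : od s + |od t - od s| = od t := by
      rw [e, abs_of_pos hd]; unfold od; ring
    rw [e2] at this
    have h3 : vv |od t - od s| ≤ vv |(t:ℝ) - s| :=
      vv_anti (by positivity) (by rw [e]; linarith [abs_nonneg ((t:ℝ) - s)])
    have h4 := mul_le_mul_of_nonneg_left h3 (vv_nonneg ha.le)
    linarith
  · subst hst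
    simp only [sub_self, abs_zero, inv_zero, mul_zero] at *
    linarith
  · have hd : (t:ℝ) - s < 0 := sub_neg.2 (by exact_mod_cast hst)
    have := bd hb (show 0 < |od t - od s| by rw [e]; have := abs_pos.2 hd.ne; positivity)
    have e2 : od t + |od t - od s| = od s := by
      rw [e, abs_of_neg hd]; unfold od; ring
    rw [e2] at this
    have h3 : vv |od t - od s| ≤ vv |(t:ℝ) - s| :=
      vv_anti (abs_pos.2 hd.ne) (by rw [e]; linarith [abs_nonneg ((t:ℝ) - s)])
    have h4 := mul_le_mul_of_nonneg_left h3 (vv_nonneg hb.le)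
    linarith

open Filter Topology in
lemma tele (s : ℕ) : Tendsto (fun N : ℕ => ∑ t ∈ Finset.range N,
    (((t:ℝ) - s)⁻¹ - ((t:ℝ) + s + 1)⁻¹)) atTop (𝓝 0) := by
  have lim (c : ℝ) : Tendsto (fun N : ℕ => ((N:ℝ) + c)⁻¹) atTop (𝓝 0) :=
    tendsto_inv_atTop_zero.comp (tendsto_atTop_add_const_right _ c tendsto_natCast_atTop_atTop)
  induction s with
  | zero =>
    have := (lim 0).neg
    rw [neg_zero] at this
    refine this.congr fun N => ?_
    induction N with
    | zero => simp
    | succ N ih => rw [Finset.sum_range_succ, ← ih]; push_cast; simp only [add_zero, sub_zero]; ring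
  | succ s ih =>
    have := (ih.sub (lim (-s - 1))).sub (lim (s + 1))
    simp only [sub_zero] at this
    refine this.congr fun N => ?_
    clear this ih
    induction N with
    | zero =>
      simp
      rw [show -(s:ℝ) - 1 = -(s + 1) by ring, inv_neg]; ring
    | succ N ih =>
      rw [Finset.sum_range_succ, Finset.sum_range_succ, ← ih]
      push_cast
      rw [show (N:ℝ) + 1 + (-s - 1) = N - s by ring, show (N:ℝ) + 1 + (s + 1) = N + (s + 1) + 1 by ring,
        show (N:ℝ) + (-s - 1) = N - (s + 1) by ring, show (N:ℝ) + (s + 1) = N + s + 1 by ring]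
      ring

lemma od_inner_sum (q s : ℕ) : ∑' t : ℕ, (FF (q + 1) (s, t) + GG (q + 1) (s, t))
    = (od s)⁻¹ ^ (q + 3) := by
  have hs : Summable fun t : ℕ => (FF (q + 1) (s, t) + GG (q + 1) (s, t)) :=
    ((summ_F (q + 1) (by omega)).add (summ_G (q + 1) (by omega))).prod_factor s
  refine tendsto_nhds_unique hs.hasSum.tendsto_sum_nat ?_
  have h := ((tele s).const_mul ((od s)⁻¹ ^ (q + 2) / 2)).const_add ((od s)⁻¹ ^ (q + 3))
  rw [mul_zero, add_zero] at h
  refine h.congr' ?_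
  filter_upwards [Filter.eventually_gt_atTop s] with N hN
  have hp : ∀ t : ℕ, FF (q + 1) (s, t) + GG (q + 1) (s, t)
      = (if s = t then (od s)⁻¹ ^ (q + 3) else 0)
        + (od s)⁻¹ ^ (q + 2) / 2 * (((t:ℝ) - s)⁻¹ - ((t:ℝ) + s + 1)⁻¹) := by
    intro t
    have ha := od_pos s
    have hb := od_pos t
    simp only [FF, GG]
    have e1 : ((t:ℝ) + s + 1)⁻¹ = 2 * (od s + od t)⁻¹ := by
      unfold od
      field_simp
      ring
    have e2 : ((t:ℝ) - s)⁻¹ = 2 * (od t - od s)⁻¹ := by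
      rw [show od t - od s = 2 * ((t:ℝ) - s) by unfold od; ring, mul_inv]; ring
    rw [e1, e2]
    split_ifs with hst
    · subst hst
      simp only [sub_self, inv_zero, pow_add]
      generalize (od s)⁻¹ ^ q = w
      field_simp
      ring
    · have hne : od t - od s ≠ 0 := by
        unfold od
        intro h
        apply hst
        have : (s:ℝ) = t := by linarith
        exact_mod_cast this
      generalize od s = a at *
      generalize od t = b at *
      simp only [pow_add]
      generalize a⁻¹ ^ q = w
      field_simp
      ring
  simp only [hp]
  rw [Finset.sum_add_distrib, ← Finset.mul_sum, Finset.sum_ite_eq]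
  simp [hN]

lemma key (q : ℕ) : ∑' z, FF (q + 1) z + ∑' z, GG (q + 1) z = ∑' s : ℕ, (od s)⁻¹ ^ (q + 3) := by
  have hF := summ_F (q + 1) (by omega)
  have hG := summ_G (q + 1) (by omega)
  rw [← hF.tsum_add hG, (hF.add hG).tsum_prod]
  exact tsum_congr fun s => od_inner_sum q s

lemma summ_two (i j : ℕ) (hi : 1 ≤ i) (hj : 2 ≤ j) :
    Summable fun z : ℕ × ℕ => (od z.1)⁻¹ ^ i * (od z.1 + od z.2)⁻¹ ^ j := by
  refine Summable.of_nonneg_of_le (fun z => ?_) (fun z => ?_) (summ_F i hi)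
  · have := od_pos z.1; have := od_pos z.2
    positivity
  · have h1 := one_le_od z.1; have h2 := one_le_od z.2
    have : (od z.1 + od z.2)⁻¹ ^ j ≤ (od z.1 + od z.2)⁻¹ ^ 2 :=
      pow_le_pow_of_le_one (by positivity) (inv_le_one_of_one_le₀ (by linarith)) hj
    have h3 : (od z.1 + od z.2)⁻¹ ≤ (od z.2)⁻¹ := by gcongr; linarith
    unfold FF
    rw [mul_assoc]
    refine mul_le_mul_of_nonneg_left (this.trans ?_) (by positivity)
    rw [sq]
    gcongr

lemma lhs_eq (q : ℕ) : (∑ i ∈ Finset.range (q + 1), MTV [q + 1 - i, i + 2]) + MTV [1, q + 2]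
    = 4 * ∑' z, FF (q + 1) z := by
  simp only [MTV_two]
  have hsw := summ_two 1 (q + 2) le_rfl (by omega)
  rw [← (Equiv.prodComm ℕ ℕ).tsum_eq (fun z : ℕ × ℕ => (od z.1)⁻¹ ^ 1 * (od z.1 + od z.2)⁻¹ ^ (q + 2)),
    ← Finset.mul_sum, ← mul_add, ← Summable.tsum_finsetSum, ← Summable.tsum_add]
  · congr 1
    refine tsum_congr fun z => ?_
    rw [← pointA]
    rfl
  · refine summable_sum fun i hi => ?_
    have := Finset.mem_range.1 hi
    exact summ_two _ _ (by omega) (by omega)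
  · exact (Equiv.prodComm ℕ ℕ).summable_iff.2 hsw
  · intro i hi
    have := Finset.mem_range.1 hi
    exact summ_two _ _ (by omega) (by omega)

lemma diag (f : ℕ → ℝ) (hf : Summable f) :
    HasSum (fun z : ℕ × ℕ => if z.1 = z.2 then f z.1 else 0) (∑' s, f s) := by
  have hi : Function.Injective fun s : ℕ => (s, s) := fun a b h => (Prod.mk.inj h).1
  rw [← hi.hasSum_iff]
  · simpa [Function.comp_def] using hf.hasSum
  · rintro ⟨a, b⟩ hx
    simp only [Set.mem_range, Prod.mk.injEq, not_exists, not_and] at hx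
    exact if_neg (hx a rfl)

lemma rhs_eq (q : ℕ) : (∑ i ∈ Finset.range q, MTV [i + 2] * MTV [q + 1 - i])
    = 4 * (2 * ∑' z, GG (q + 1) z + q * ∑' s : ℕ, (od s)⁻¹ ^ (q + 3)) := by
  have hG := summ_G (q + 1) (by omega)
  have hG' : Summable fun z : ℕ × ℕ => GG (q + 1) z.swap := (Equiv.prodComm ℕ ℕ).summable_iff.2 hG
  have hGe : ∑' z : ℕ × ℕ, GG (q + 1) z.swap = ∑' z, GG (q + 1) z :=
    (Equiv.prodComm ℕ ℕ).tsum_eq _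
  have hd := diag (fun s => (q:ℝ) * (od s)⁻¹ ^ (q + 3)) ((summ_pow (q + 3) (by omega)).mul_left _)
  rw [tsum_mul_left] at hd
  have hn (j : ℕ) (hj : 2 ≤ j) : Summable fun s : ℕ => ‖(od s)⁻¹ ^ j‖ := (summ_pow j hj).norm
  have e : ∀ i ∈ Finset.range q, MTV [i + 2] * MTV [q + 1 - i]
      = 4 * ∑' z : ℕ × ℕ, (od z.1)⁻¹ ^ (i + 2) * (od z.2)⁻¹ ^ (q + 1 - i) := by
    intro i hi
    have := Finset.mem_range.1 hi
    rw [MTV_one, MTV_one, ← tsum_mul_tsum_of_summable_norm (hn _ (by omega)) (hn _ (by omega))]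
    ring
  rw [Finset.sum_congr rfl e, ← Finset.mul_sum, ← Summable.tsum_finsetSum]
  · simp only [pointB]
    rw [((hG.hasSum.add hG'.hasSum).add hd).tsum_eq, hGe]
    ring
  · intro i hi
    have := Finset.mem_range.1 hi
    exact summable_mul_of_summable_norm (f := fun s : ℕ => (od s)⁻¹ ^ (i + 2))
      (g := fun s : ℕ => (od s)⁻¹ ^ (q + 1 - i)) (hn _ (by omega)) (hn _ (by omega))

/-- **Lemma (sum formula in depth 2).** For every integer `k ≥ 3`,
`∑_{j=2}^{k−1} T(k−j, j) + T(1, k−1) = (k−1) T(k) − (1/2) ∑_{j=2}^{k−2} T(j) T(k−j)`. -/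
theorem MTV_sum_depth2 (k : ℕ) (hk : 3 ≤ k) :
    (∑ j ∈ Finset.Icc 2 (k - 1), MTV [k - j, j]) + MTV [1, k - 1]
      = ((k : ℝ) - 1) * MTV [k]
        - (1 / 2) * ∑ j ∈ Finset.Icc 2 (k - 2), MTV [j] * MTV [k - j] := by
  obtain ⟨q, rfl⟩ : ∃ q, k = q + 3 := ⟨k - 3, by omega⟩
  have h1 : ∑ j ∈ Finset.Icc 2 (q + 3 - 1), MTV [q + 3 - j, j]
      = ∑ i ∈ Finset.range (q + 1), MTV [q + 1 - i, i + 2] := by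
    rw [show Finset.Icc 2 (q + 3 - 1) = Finset.Ico 2 (q + 3) by ext; simp; omega,
      Finset.sum_Ico_eq_sum_range]
    refine Finset.sum_congr (by congr 1) fun i _ => ?_
    rw [show q + 3 - (2 + i) = q + 1 - i by omega, add_comm 2 i]
  have h2 : ∑ j ∈ Finset.Icc 2 (q + 3 - 2), MTV [j] * MTV [q + 3 - j]
      = ∑ i ∈ Finset.range q, MTV [i + 2] * MTV [q + 1 - i] := by
    rw [show Finset.Icc 2 (q + 3 - 2) = Finset.Ico 2 (q + 2) by ext; simp; omega,
      Finset.sum_Ico_eq_sum_range]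
    refine Finset.sum_congr (by congr 1) fun i _ => ?_
    rw [show q + 3 - (2 + i) = q + 1 - i by omega, add_comm 2 i]
  rw [h1, h2, show q + 3 - 1 = q + 2 by omega, lhs_eq, rhs_eq, MTV_one, ← key]
  push_cast
  ring
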